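/- Let S ⊆ A be a coalition and suppose all ANOs in S have the same popularity distribution: λ_a(f) = T_a·q(f) with traffic volumes T_a > 0 and a common popularity law q : F → ℝ with q(f) > 0 for all f. Let H_a(C) = ∑_{f∈C} λ_a(f), ζ_a(C) = H_a(C) / ∑_{n∈S} H_n(C) (for C nonempty), and Φ_a(C, S) = b·H_a(C) − ζ_a(C)·|C|·s, with Φ_a(∅, S) = 0. Then ζ_a(C) = T_a / ∑_{n∈S} T_n for every nonempty C, and for every choice of subsidy fractions r : A → ℝ with r_a ≥ 0, the subsidy sub(C, S) = ∑_{a∈S} r_a·Φ_a(C, S) = (∑_{n∈S} r_n·T_n / ∑_{n∈S} T_n)·E(C, S) is maximized over all C ⊆ F at C = C*(S); the maximizer is independent of r (optimality and neutrality). -/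

import Mathlib

/-!
Sharing the storage cost in proportion to hits makes each member's saving its hit share of the joint
saving: `Φ_a(C, S) = ζ_a(C) · E(C, S)` as soon as the coalition has hits on `C`. Under a common
popularity law the share `ζ_a(C)` does not depend on `C`, so every subsidy is a nonnegative multiple
of `E(·, S)`, and `E(·, S)` is maximal at the set of contents whose contribution is positive.
-/

open Finset

/-- The caching saving `E(C, S)` of the coalition `S` when it caches the contents `C`, at unit
bandwidth price `b` and unit storage price `s`. -/
def cachingSaving {A F K : Type*} [Ring K] (lam : A → F → K) (b s : K) (C : Finset F)
    (S : Finset A) : K :=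
  ∑ f ∈ C, (b * ∑ a ∈ S, lam a f - s)

/-- The share `ζ_a(C)` of member `a` in the hits of the coalition `S` on the cached contents `C`;
it is `0` by convention when the coalition has no hits at all. -/
def hitShare {A F K : Type*} [Field K] (lam : A → F → K) (S : Finset A) (a : A)
    (C : Finset F) : K :=
  (∑ f ∈ C, lam a f) / ∑ n ∈ S, ∑ f ∈ C, lam n f

/-- The saving `Φ_a(C, S)` of member `a` when the storage cost of `C` is split in proportion to
`hitShare`. -/
def memberSaving {A F K : Type*} [Field K] (lam : A → F → K) (b s : K) (a : A) (C : Finset F)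
    (S : Finset A) : K :=
  b * ∑ f ∈ C, lam a f - hitShare lam S a C * #C * s

theorem sum_le_sum_of_nonneg_of_nonpos_compl {ι M : Type*} [AddCommMonoid M] [PartialOrder M]
    [IsOrderedCancelAddMonoid M] {g : ι → M} {P : Finset ι} (hnonneg : ∀ i ∈ P, 0 ≤ g i)
    (hnonpos : ∀ i ∉ P, g i ≤ 0) (C : Finset ι) : ∑ i ∈ C, g i ≤ ∑ i ∈ P, g i := by
  classical
  rw [← sum_sdiff_le_sum_sdiff]
  exact (sum_nonpos fun i hi ↦ hnonpos i (mem_sdiff.1 hi).2).trans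
    (sum_nonneg fun i hi ↦ hnonneg i (mem_sdiff.1 hi).1)

theorem cachingSaving_eq_mul_sum_sub_card_mul {A F K : Type*} [Ring K] {lam : A → F → K} {b s : K}
    {S : Finset A} {C : Finset F} :
    cachingSaving lam b s C S = b * ∑ a ∈ S, ∑ f ∈ C, lam a f - #C * s := by
  rw [cachingSaving, sum_sub_distrib, ← mul_sum, sum_comm, sum_const, nsmul_eq_mul]

theorem sum_sum_eq_of_common_popularity {A F K : Type*} [NonUnitalNonAssocSemiring K]
    {lam : A → F → K} {T : A → K} {q : F → K} {S : Finset A} {C : Finset F}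
    (hlam : ∀ a ∈ S, ∀ f, lam a f = T a * q f) :
    ∑ n ∈ S, ∑ f ∈ C, lam n f = (∑ n ∈ S, T n) * ∑ f ∈ C, q f := by
  rw [sum_mul_sum]
  exact sum_congr rfl fun n hn ↦ sum_congr rfl fun f _ ↦ hlam n hn f

section

variable {A F K : Type*} [Field K] {lam : A → F → K} {b s : K} {S : Finset A} {C : Finset F}

theorem memberSaving_empty (a : A) : memberSaving lam b s a ∅ S = 0 := by
  simp [memberSaving]

theorem memberSaving_eq_hitShare_mul_cachingSaving
    (hhits : ∑ n ∈ S, ∑ f ∈ C, lam n f ≠ 0) (a : A) :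
    memberSaving lam b s a C S = hitShare lam S a C * cachingSaving lam b s C S := by
  have hshare : ∑ f ∈ C, lam a f = hitShare lam S a C * ∑ n ∈ S, ∑ f ∈ C, lam n f :=
    (div_mul_cancel₀ _ hhits).symm
  rw [memberSaving, cachingSaving_eq_mul_sum_sub_card_mul, hshare]
  ring

section CommonPopularity

variable {T : A → K} {q : F → K}

theorem hitShare_eq_of_common_popularity (hlam : ∀ a ∈ S, ∀ f, lam a f = T a * q f)
    (hq : ∑ f ∈ C, q f ≠ 0) {a : A} (ha : a ∈ S) :
    hitShare lam S a C = T a / ∑ n ∈ S, T n := by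
  have hhits : ∑ f ∈ C, lam a f = T a * ∑ f ∈ C, q f := by
    rw [mul_sum]
    exact sum_congr rfl fun f _ ↦ hlam a ha f
  rw [hitShare, hhits, sum_sum_eq_of_common_popularity hlam, mul_div_mul_right _ _ hq]

theorem memberSaving_eq_of_common_popularity (hlam : ∀ a ∈ S, ∀ f, lam a f = T a * q f)
    (hT : ∑ n ∈ S, T n ≠ 0) (hq : C.Nonempty → ∑ f ∈ C, q f ≠ 0) {a : A} (ha : a ∈ S) :
    memberSaving lam b s a C S = T a / (∑ n ∈ S, T n) * cachingSaving lam b s C S := by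
  obtain rfl | hC := C.eq_empty_or_nonempty
  · rw [memberSaving_empty, cachingSaving, sum_empty, mul_zero]
  · have hhits : ∑ n ∈ S, ∑ f ∈ C, lam n f ≠ 0 := by
      rw [sum_sum_eq_of_common_popularity hlam]
      exact mul_ne_zero hT (hq hC)
    rw [memberSaving_eq_hitShare_mul_cachingSaving hhits,
      hitShare_eq_of_common_popularity hlam (hq hC) ha]

theorem sum_mul_memberSaving_of_common_popularity (hlam : ∀ a ∈ S, ∀ f, lam a f = T a * q f)
    (hT : ∑ n ∈ S, T n ≠ 0) (hq : C.Nonempty → ∑ f ∈ C, q f ≠ 0) (r : A → K) :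
    ∑ a ∈ S, r a * memberSaving lam b s a C S =
      (∑ n ∈ S, r n * T n) / (∑ n ∈ S, T n) * cachingSaving lam b s C S := by
  rw [sum_div, sum_mul]
  refine sum_congr rfl fun a ha ↦ ?_
  rw [memberSaving_eq_of_common_popularity hlam hT hq ha, ← mul_assoc, mul_div_assoc]

end CommonPopularity

variable [LinearOrder K] [IsStrictOrderedRing K]

theorem cachingSaving_le_of_mem_iff (hb : 0 < b) {Copt : Finset F}
    (hCopt : ∀ f, f ∈ Copt ↔ s / b < ∑ a ∈ S, lam a f) (C : Finset F) :
    cachingSaving lam b s C S ≤ cachingSaving lam b s Copt S := by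
  have mem_iff (f : F) : f ∈ Copt ↔ 0 < b * ∑ a ∈ S, lam a f - s := by
    rw [hCopt, div_lt_iff₀' hb, sub_pos]
  exact sum_le_sum_of_nonneg_of_nonpos_compl (fun f hf ↦ ((mem_iff f).1 hf).le)
    (fun f hf ↦ not_lt.1 (mt (mem_iff f).2 hf)) C

theorem common_popularity_subsidy_optimal_neutral_general
    {T : A → K} (hT : ∀ a ∈ S, 0 < T a) {q : F → K} (hq : ∀ f, 0 < q f)
    (hlam : ∀ a ∈ S, ∀ f, lam a f = T a * q f) (hb : 0 < b) (hSne : S.Nonempty)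
    {H : A → Finset F → K} (hH : ∀ a C, H a C = ∑ f ∈ C, lam a f)
    {zeta : A → Finset F → K}
    (hzeta : ∀ a, ∀ C : Finset F, C.Nonempty → zeta a C = H a C / ∑ n ∈ S, H n C)
    {Phi : A → Finset F → K}
    (hPhi : ∀ a, ∀ C : Finset F, C.Nonempty → Phi a C = b * H a C - zeta a C * #C * s)
    (hPhi0 : ∀ a, Phi a ∅ = 0)
    {Copt : Finset F} (hCopt : ∀ f, f ∈ Copt ↔ s / b < ∑ n ∈ S, lam n f) :
    (∀ a ∈ S, ∀ C : Finset F, C.Nonempty → zeta a C = T a / ∑ n ∈ S, T n) ∧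
    ∀ r : A → K, (∀ a ∈ S, 0 ≤ r a) →
      (∀ C, ∑ a ∈ S, r a * Phi a C =
        (∑ n ∈ S, r n * T n) / (∑ n ∈ S, T n) * cachingSaving lam b s C S) ∧
      ∀ C, ∑ a ∈ S, r a * Phi a C ≤ ∑ a ∈ S, r a * Phi a Copt := by
  have traffic_pos : 0 < ∑ n ∈ S, T n := sum_pos hT hSne
  have popularity_pos {C : Finset F} (hC : C.Nonempty) : 0 < ∑ f ∈ C, q f :=
    sum_pos (fun f _ ↦ hq f) hC
  have zeta_eq (a : A) {C : Finset F} (hC : C.Nonempty) : zeta a C = hitShare lam S a C := by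
    simp only [hzeta a C hC, hH, hitShare]
  have Phi_eq (a : A) (C : Finset F) : Phi a C = memberSaving lam b s a C S := by
    obtain rfl | hC := C.eq_empty_or_nonempty
    · rw [hPhi0, memberSaving_empty]
    · rw [hPhi a C hC, hH, zeta_eq a hC, memberSaving]
  have subsidy_eq (r : A → K) (C : Finset F) : ∑ a ∈ S, r a * Phi a C =
      (∑ n ∈ S, r n * T n) / (∑ n ∈ S, T n) * cachingSaving lam b s C S := by
    simp only [Phi_eq]
    exact sum_mul_memberSaving_of_common_popularity hlam traffic_pos.ne'
      (fun hC ↦ (popularity_pos hC).ne') r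
  refine ⟨fun a ha C hC ↦ ?_, fun r hr ↦ ⟨subsidy_eq r, fun C ↦ ?_⟩⟩
  · rw [zeta_eq a hC, hitShare_eq_of_common_popularity hlam (popularity_pos hC).ne' ha]
  · have factor_nonneg : 0 ≤ (∑ n ∈ S, r n * T n) / ∑ n ∈ S, T n :=
      div_nonneg (sum_nonneg fun a ha ↦ mul_nonneg (hr a ha) (hT a ha).le) traffic_pos.le
    rw [subsidy_eq, subsidy_eq]
    exact mul_le_mul_of_nonneg_left (cachingSaving_le_of_mem_iff hb hCopt C) factor_nonneg

end

/-- If all ANOs in `S` share a common popularity law, `λ_a(f) = T_a·q(f)`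
with `T_a > 0` and `q(f) > 0`, then `ζ_a(C) = T_a / ∑_{n∈S} T_n` for every nonempty `C`,
and for every choice of nonnegative subsidy fractions `r`, the subsidy
`sub(C, S) = ∑_{a∈S} r_a·Φ_a(C, S)` equals `(∑_{n∈S} r_n·T_n / ∑_{n∈S} T_n)·E(C, S)` and
is maximized over all `C ⊆ F` at `C = C*(S)`; the maximizer is independent of `r`
(optimality and neutrality). -/
theorem common_popularity_subsidy_optimal_neutral
    {A F : Type*} [Fintype A] [Fintype F]
    (lam : A → F → ℝ)
    (T : A → ℝ) (hT : ∀ a, 0 < T a)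
    (q : F → ℝ) (hq : ∀ f, 0 < q f)
    (hlam : ∀ a f, lam a f = T a * q f)
    (b s : ℝ) (hb : 0 < b) (hs : 0 < s)
    (S : Finset A) (hSne : S.Nonempty)
    (H : A → Finset F → ℝ) (hH : ∀ a C, H a C = ∑ f ∈ C, lam a f)
    (zeta : A → Finset F → ℝ)
    (hzeta : ∀ a, ∀ C : Finset F, C.Nonempty →
      zeta a C = H a C / ∑ n ∈ S, H n C)
    (Phi : A → Finset F → ℝ)
    (hPhi : ∀ a, ∀ C : Finset F, C.Nonempty →
      Phi a C = b * H a C - zeta a C * (C.card : ℝ) * s)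
    (hPhi0 : ∀ a, Phi a (∅ : Finset F) = 0) :
    (∀ a ∈ S, ∀ C : Finset F, C.Nonempty → zeta a C = T a / ∑ n ∈ S, T n) ∧
    (∀ r : A → ℝ, (∀ a, 0 ≤ r a) →
      (∀ C : Finset F,
        (∑ a ∈ S, r a * Phi a C) =
          ((∑ n ∈ S, r n * T n) / (∑ n ∈ S, T n)) *
            ∑ f ∈ C, (b * ∑ a ∈ S, lam a f - s)) ∧
      (∀ C : Finset F,
        (∑ a ∈ S, r a * Phi a C) ≤
          ∑ a ∈ S, r a * Phi a
            (Finset.univ.filter (fun f => s / b < ∑ n ∈ S, lam n f)))) := by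
  have general := common_popularity_subsidy_optimal_neutral_general (fun a _ ↦ hT a) hq
    (fun a _ ↦ hlam a) hb hSne hH hzeta hPhi hPhi0 fun f ↦ mem_filter_univ f
  exact ⟨general.1, fun r hr ↦ general.2 r fun a _ ↦ hr a⟩
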